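/- For every finite nilpotent group G, S(G) ≥ |G|, and equality S(G) = |G| holds if and only if G is cyclic. -/

import Mathlib

/-- `phiG G` is the number of elements of `G` whose order equals the exponent of `G`. -/
noncomputable def phiG (G : Type*) [Group G] : ℕ :=
  Nat.card {a : G // orderOf a = Monoid.exponent G}

/-- `SG G` is the sum of `phiG H` over all subgroups `H` of `G`. -/
noncomputable def SG (G : Type*) [Group G] : ℕ :=
  ∑ᶠ H : Subgroup G, phiG H

theorem exists_orderOf_eq_exponent_aux (G : Type*) [Group G] [Finite G]
    (hG : Group.IsNilpotent G) : ∃ x : G, orderOf x = Monoid.exponent G := by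
  have h := ((Group.isNilpotent_of_finite_tfae (G := G)).out 0 4).mp hG
  obtain ⟨e⟩ := h
  have hy : ∀ p : (Nat.card G).primeFactors,
      ∃ y : G, orderOf y = (p : ℕ) ^ (Monoid.exponent G).factorization p := fun p =>
    Nat.Prime.exists_orderOf_eq_pow_factorization_exponent G (Nat.prime_of_mem_primeFactors p.2)
  choose y hy using hy
  let x : ∀ p : (Nat.card G).primeFactors, ∀ P : Sylow p G, P := fun p P => e.symm (y p) p P
  have hE : Monoid.exponent G ≠ 0 := Monoid.exponent_ne_zero_of_finite
  have key : ∀ p, y p ^ orderOf x = 1 := by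
    intro p
    apply e.symm.injective
    rw [map_pow, map_one]
    funext q Q
    by_cases hqp : q = p
    · subst hqp
      have := congrFun (congrFun (pow_orderOf_eq_one x) q) Q
      simpa [x] using this
    · have hp := Nat.prime_of_mem_primeFactors p.2
      have hq := Nat.prime_of_mem_primeFactors q.2
      have h1 : (e.symm (y p) q Q) ^ ((p : ℕ) ^ (Monoid.exponent G).factorization p) = 1 := by
        have h2 : (e.symm (y p)) ^ ((p : ℕ) ^ (Monoid.exponent G).factorization p) = 1 := by
          rw [← map_pow, ← hy p, pow_orderOf_eq_one, map_one]
        exact congrFun (congrFun h2 q) Q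
      obtain ⟨k, hk⟩ := Q.isPGroup' (e.symm (y p) q Q)
      have hc : Nat.Coprime ((p : ℕ) ^ (Monoid.exponent G).factorization p) ((q : ℕ) ^ k) := by
        apply Nat.Coprime.pow
        exact (Nat.coprime_primes hp hq).2 (fun h => hqp (Subtype.ext h.symm))
      have h3 : orderOf (e.symm (y p) q Q) = 1 :=
        Nat.eq_one_of_dvd_coprimes hc (orderOf_dvd_of_pow_eq_one h1) (orderOf_dvd_of_pow_eq_one hk)
      rw [orderOf_eq_one_iff] at h3
      simp [h3]
  refine ⟨e x, ?_⟩
  rw [MulEquiv.orderOf_eq]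
  apply Nat.dvd_antisymm
  · rw [← MulEquiv.orderOf_eq e x]
    exact Monoid.order_dvd_exponent _
  · rw [← Nat.factorization_prime_le_iff_dvd hE (isOfFinOrder_iff_pow_eq_one.2 ?_ : IsOfFinOrder x).orderOf_pos.ne']
    · intro p hp
      by_cases hpG : p ∈ (Nat.card G).primeFactors
      · have h1 := orderOf_dvd_of_pow_eq_one (key ⟨p, hpG⟩)
        rw [hy ⟨p, hpG⟩] at h1
        refine (hp.pow_dvd_iff_le_factorization ?_).1 h1
        rw [← MulEquiv.orderOf_eq e x]
        exact (orderOf_pos _).ne'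
      · have : ¬ p ∣ Monoid.exponent G := fun h => hpG
          (Nat.mem_primeFactors.2 ⟨hp, h.trans Group.exponent_dvd_nat_card, Nat.card_pos.ne'⟩)
        rw [Nat.factorization_eq_zero_of_not_dvd this]
        exact Nat.zero_le _
    · refine ⟨orderOf (e x), orderOf_pos _, ?_⟩
      rw [MulEquiv.orderOf_eq, pow_orderOf_eq_one]

theorem zpowers_aux {G : Type*} [Group G] [Finite G] (a : G) :
    orderOf (⟨a, Subgroup.mem_zpowers a⟩ : Subgroup.zpowers a)
      = Monoid.exponent (Subgroup.zpowers a) := by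
  rw [IsCyclic.exponent_eq_card, Nat.card_zpowers, Subgroup.orderOf_mk]

def embAux (G : Type*) [Group G] [Finite G] (a : G) :
    Σ H : Subgroup G, {a : H // orderOf a = Monoid.exponent H} :=
  ⟨Subgroup.zpowers a, ⟨⟨a, Subgroup.mem_zpowers a⟩, zpowers_aux a⟩⟩

theorem SG_eq_aux (G : Type*) [Group G] [Finite G] :
    SG G = Nat.card (Σ H : Subgroup G, {a : H // orderOf a = Monoid.exponent H}) := by
  classical
  have := Fintype.ofFinite (Subgroup G)
  rw [Nat.card_sigma, SG, finsum_eq_sum_of_fintype]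
  rfl

theorem embAux_inj (G : Type*) [Group G] [Finite G] : Function.Injective (embAux G) := by
  intro a b h
  exact congrArg (fun s : (Σ H : Subgroup G, {a : H // orderOf a = Monoid.exponent H}) =>
    ((s.2.1 : s.1) : G)) h

theorem nilpotent_S_ge_card_and_eq_iff_cyclic (G : Type*) [Group G] [Fintype G]
    (hG : Group.IsNilpotent G) :
    SG G ≥ Nat.card G ∧ (SG G = Nat.card G ↔ IsCyclic G) := by
  rw [SG_eq_aux]
  refine ⟨Nat.card_le_card_of_injective _ (embAux_inj G), ?_, ?_⟩
  · intro h
    have hb := (Nat.bijective_iff_injective_and_card (embAux G)).2 ⟨embAux_inj G, h.symm⟩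
    obtain ⟨x, hx⟩ := exists_orderOf_eq_exponent_aux G hG
    obtain ⟨a, ha⟩ := hb.2 ⟨⊤, ⟨⟨x, Subgroup.mem_top x⟩, by
      rw [Subgroup.orderOf_mk, hx]
      exact (Monoid.exponent_eq_of_mulEquiv Subgroup.topEquiv).symm⟩⟩
    have h1 : Subgroup.zpowers a = ⊤ := congrArg Sigma.fst ha
    have h2 : ∀ g : G, g ∈ Subgroup.zpowers a := fun g => by rw [h1]; trivial
    exact ⟨a, h2⟩
  · intro hc
    symm
    apply Nat.card_eq_of_bijective (embAux G)
    refine ⟨embAux_inj G, ?_⟩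
    rintro ⟨H, ⟨⟨a, haH⟩, ha⟩⟩
    have h1 : Subgroup.zpowers a = H := by
      apply Subgroup.eq_of_le_of_card_ge
      · rwa [Subgroup.zpowers_le]
      · rw [IsCyclic.exponent_eq_card, Subgroup.orderOf_mk] at ha
        rw [Nat.card_zpowers, ha]
    subst h1
    exact ⟨a, rfl⟩
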